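/- arXiv:1706.06928 — 2 statements merged into one kernel-verified Lean document; each statement's English description precedes it below -/
import Mathlib

section
/- Let u : ℝ → ℝ be a continuous integrable function with u(x) → 0 as |x| → ∞, which is differentiable almost everywhere with integrable derivative u′ satisfying the fundamental theorem of calculus u(b) − u(a) = ∫_a^b u′(t) dt for all a < b, and suppose u′(x) ≥ 0 for almost every x < 0 and u′(x) ≤ 0 for almost every x > 0 (i.e. sgn u′(x) = −sgn x a.e.). Then equality holds in the one-dimensional optimal embedding inequality: ‖u‖_∞ = u(0) = (1/2) ∫_ℝ |u′(t)| dt. In particular u(x) = e^{−|x|} satisfies ‖u‖_∞ = (1/2)∫_ℝ|u′|. -/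
open MeasureTheory Filter

/-- equality cases of the one-dimensional inequality
`‖u‖_∞ ≤ (1/2)∫|u'|`: if `u` is continuous, integrable, vanishes at `±∞`, is a.e.
differentiable with integrable derivative `u'` satisfying the fundamental theorem of
calculus, and `sgn u' = -sgn x` a.e., then `‖u‖_∞ = u(0) = (1/2)∫_ℝ |u'|`.
In particular `u(x) = e^{-|x|}` realizes equality. -/
theorem statement16 (u u' : ℝ → ℝ)
    (hcont : Continuous u) (hint : Integrable u)
    (htop : Tendsto u atTop (nhds 0)) (hbot : Tendsto u atBot (nhds 0))
    (hderiv : ∀ᵐ x : ℝ, HasDerivAt u (u' x) x) (hint' : Integrable u')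
    (hftc : ∀ a b : ℝ, a < b → u b - u a = ∫ t in a..b, u' t)
    (hsign₁ : ∀ᵐ x : ℝ, x < 0 → 0 ≤ u' x)
    (hsign₂ : ∀ᵐ x : ℝ, 0 < x → u' x ≤ 0) :
    ((∀ x, |u x| ≤ u 0) ∧ u 0 = (1 / 2) * ∫ t : ℝ, |u' t|) ∧
      (⨆ x : ℝ, |Real.exp (-|x|)|) =
        (1 / 2) * ∫ x : ℝ, |deriv (fun t : ℝ => Real.exp (-|t|)) x| := by
  have hR : ∀ x : ℝ, ∫ t in Set.Ioi x, u' t = - u x := by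
    intro x
    have h1 := intervalIntegral_tendsto_integral_Ioi x hint'.integrableOn tendsto_id
    have h2 : Tendsto (fun b => u b - u x) atTop (nhds (0 - u x)) := htop.sub_const _
    have h3 : Tendsto (fun b => ∫ t in x..id b, u' t) atTop (nhds (0 - u x)) := by
      refine h2.congr' ?_
      filter_upwards [eventually_gt_atTop x] with b hb
      exact hftc x b hb
    have := tendsto_nhds_unique h1 h3
    linarith
  have hL : ∀ x : ℝ, ∫ t in Set.Iic x, u' t = u x := by
    intro x
    have h1 := intervalIntegral_tendsto_integral_Iic x hint'.integrableOn tendsto_id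
    have h2 : Tendsto (fun b => u x - u b) atBot (nhds (u x - 0)) := hbot.const_sub _
    have h3 : Tendsto (fun b => ∫ t in id b..x, u' t) atBot (nhds (u x - 0)) := by
      refine h2.congr' ?_
      filter_upwards [eventually_lt_atBot x] with b hb
      exact hftc b x hb
    have := tendsto_nhds_unique h1 h3
    linarith
  have hne : ∀ᵐ x : ℝ, x ≠ 0 := by
    simp [ae_iff]
  have hs1 : ∀ᵐ x : ℝ, x ≤ 0 → 0 ≤ u' x := by
    filter_upwards [hsign₁, hne] with x h1 h2 h3
    exact h1 (lt_of_le_of_ne h3 h2)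
  have hAR : ∀ x : ℝ, 0 ≤ x → ∫ t in Set.Ioi x, |u' t| = u x := by
    intro x hx
    have : ∫ t in Set.Ioi x, |u' t| = ∫ t in Set.Ioi x, - u' t := by
      refine setIntegral_congr_ae measurableSet_Ioi ?_
      filter_upwards [hsign₂] with t ht htx
      exact abs_of_nonpos (ht (lt_of_le_of_lt hx htx))
    rw [this, integral_neg, hR, neg_neg]
  have hAL : ∀ x : ℝ, x ≤ 0 → ∫ t in Set.Iic x, |u' t| = u x := by
    intro x hx
    rw [← hL x]
    refine setIntegral_congr_ae measurableSet_Iic ?_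
    filter_upwards [hs1] with t ht htx
    exact abs_of_nonneg (ht (le_trans htx hx))
  refine ⟨⟨?_, ?_⟩, ?_⟩
  · intro x
    rcases le_total 0 x with hx | hx
    · rw [← hAR x hx, ← hAR 0 le_rfl, abs_of_nonneg (integral_nonneg fun _ => abs_nonneg _)]
      exact setIntegral_mono_set hint'.abs.integrableOn
        (Eventually.of_forall fun _ => abs_nonneg _) (Set.Ioi_subset_Ioi hx).eventuallyLE
    · rw [← hAL x hx, ← hAL 0 le_rfl, abs_of_nonneg (integral_nonneg fun _ => abs_nonneg _)]
      exact setIntegral_mono_set hint'.abs.integrableOn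
        (Eventually.of_forall fun _ => abs_nonneg _) (Set.Iic_subset_Iic.2 hx).eventuallyLE
  · have := intervalIntegral.integral_Iic_add_Ioi (b := (0 : ℝ)) (f := fun t => |u' t|)
      (μ := volume) hint'.abs.integrableOn hint'.abs.integrableOn
    rw [hAL 0 le_rfl, hAR 0 le_rfl] at this
    rw [← this]; ring
  · have h1 : ∫ x : ℝ, |deriv (fun t : ℝ => Real.exp (-|t|)) x| = 2 := by
      have : ∫ x : ℝ, |deriv (fun t : ℝ => Real.exp (-|t|)) x| = ∫ x : ℝ, Real.exp (-|x|) := by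
        refine integral_congr_ae ?_
        filter_upwards [hne] with x hx
        have h := ((hasDerivAt_abs hx).neg).exp
        have h' : deriv (fun t : ℝ => Real.exp (-|t|)) x = _ := h.deriv
        rw [h']
        rcases lt_or_gt_of_ne hx with h | h
        · simp [h]
        · simp [h]
      rw [this, integral_comp_abs (f := fun x => Real.exp (-x)), integral_exp_neg_Ioi_zero]
      norm_num
    rw [h1]
    have hle : ∀ x : ℝ, |Real.exp (-|x|)| ≤ 1 := by
      intro x
      rw [abs_of_pos (Real.exp_pos _)]
      exact Real.exp_le_one_iff.2 (by simp)
    have : (⨆ x : ℝ, |Real.exp (-|x|)|) = 1 := by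
      refine le_antisymm (ciSup_le hle) ?_
      have := le_ciSup (f := fun x : ℝ => |Real.exp (-|x|)|) ⟨1, by rintro _ ⟨x, rfl⟩; exact hle x⟩ 0
      simpa using this
    rw [this]; norm_num
end

section
/- The first values of the constants ℓ_N are: ℓ_1 = 1, ℓ_2 = 2, and ℓ_3 = 28. Equivalently: for N = 1, |d log|x|/dx|² · |x|² = 1 for x ≠ 0; for N = 2, ∑_{(i_1,i_2)∈{1,2}²} (∂² log|x|/∂x_{i_1}∂x_{i_2}(x))² · |x|⁴ = 2 for x ∈ ℝ²∖{0}; and for N = 3, ∑_{(i_1,i_2,i_3)∈{1,2,3}³} (∂³ log|x|/∂x_{i_1}∂x_{i_2}∂x_{i_3}(x))² · |x|⁶ = 28 for x ∈ ℝ³∖{0}. Consequently the optimal embedding constants are K_1 = 1/2, K_2 = 1/(2π√2), and K_3 = 1/(4π√28). -/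
open MeasureTheory Metric Filter Matrix

noncomputable section

/-- The mixed partial derivative `∂^m u / ∂x_{i 0} ⋯ ∂x_{i (m-1)} (x)`, realized as the
iterated Fréchet derivative applied to the corresponding standard basis vectors. -/
def mixedPartial (N m : ℕ) (u : EuclideanSpace ℝ (Fin N) → ℝ)
    (i : Fin m → Fin N) (x : EuclideanSpace ℝ (Fin N)) : ℝ :=
  iteratedFDeriv ℝ m u x fun k => EuclideanSpace.single (i k) 1

/-- The Frobenius norm `|∇^m u (x)|` of the tensor of `m`-th order partial derivatives. -/
def gradNorm (N m : ℕ) (u : EuclideanSpace ℝ (Fin N) → ℝ)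
    (x : EuclideanSpace ℝ (Fin N)) : ℝ :=
  Real.sqrt (∑ i : Fin m → Fin N, mixedPartial N m u i x ^ 2)

/-- The function `x ↦ log |x|`. -/
def logNorm (N : ℕ) (x : EuclideanSpace ℝ (Fin N)) : ℝ := Real.log ‖x‖

/-- The constant `ℓ_N = ∑ (∂^N log|x|/∂x_{i_1}⋯∂x_{i_N} (e_1))²`. -/
def ell (N : ℕ) (hN : 0 < N) : ℝ :=
  ∑ i : Fin N → Fin N,
    mixedPartial N N (logNorm N) i (EuclideanSpace.single (⟨0, hN⟩ : Fin N) 1) ^ 2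

/-- `ω_{N-1}`, the surface measure of the unit sphere `𝕊^{N-1} ⊂ ℝ^N`,
expressed as `N` times the volume of the unit ball. -/
def omegaSphere (N : ℕ) : ℝ :=
  N * (volume (ball (0 : EuclideanSpace ℝ (Fin N)) 1)).toReal

lemma sum_fin_fun_succ {n N : ℕ} (F : (Fin (n + 1) → Fin N) → ℝ) :
    ∑ i, F i = ∑ a : Fin N, ∑ j : Fin n → Fin N, F (Fin.cons a j) := by
  rw [← (Fin.consEquiv (fun _ : Fin (n + 1) => Fin N)).sum_comp, Fintype.sum_prod_type]
  rfl

lemma iter_step {N n : ℕ} {f g : EuclideanSpace ℝ (Fin N) → ℝ} {x : EuclideanSpace ℝ (Fin N)}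
    (hf : ContDiffAt ℝ (n + 1 : ℕ) f x) (m : Fin (n + 1) → EuclideanSpace ℝ (Fin N)) {d : ℝ}
    (hg : (fun y => iteratedFDeriv ℝ n f y (Fin.tail m)) =ᶠ[nhds x] g)
    (hd : HasDerivAt (fun t : ℝ => g (x + t • m 0)) d 0) :
    iteratedFDeriv ℝ (n + 1) f x m = d := by
  have hdiff : DifferentiableAt ℝ (iteratedFDeriv ℝ n f) x :=
    hf.differentiableAt_iteratedFDeriv (by exact_mod_cast Nat.lt_succ_self n)
  have h1 : HasFDerivAt (fun y => iteratedFDeriv ℝ n f y (Fin.tail m))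
      ((ContinuousMultilinearMap.apply ℝ (fun _ : Fin n => EuclideanSpace ℝ (Fin N)) ℝ
        (Fin.tail m)).comp (fderiv ℝ (iteratedFDeriv ℝ n f) x)) x :=
    (ContinuousMultilinearMap.apply ℝ (fun _ : Fin n => EuclideanSpace ℝ (Fin N)) ℝ
        (Fin.tail m)).hasFDerivAt.comp x hdiff.hasFDerivAt
  have h2 := (h1.congr_of_eventuallyEq hg.symm).hasLineDerivAt (m 0)
  rw [iteratedFDeriv_succ_apply_left]
  exact HasDerivAt.unique h2 hd

lemma contDiffAt_logNorm {N : ℕ} {x : EuclideanSpace ℝ (Fin N)} (hx : x ≠ 0) (n : ℕ) :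
    ContDiffAt ℝ n (logNorm N) x :=
  (contDiffAt_norm ℝ hx).log (norm_ne_zero_iff.2 hx)

lemma logNorm_eq (N : ℕ) (x : EuclideanSpace ℝ (Fin N)) :
    logNorm N x = Real.log (inner ℝ x x) / 2 := by
  rw [real_inner_self_eq_norm_sq, Real.log_pow, logNorm]; push_cast; ring

lemma hasDerivAt_in {N : ℕ} (x v a : EuclideanSpace ℝ (Fin N)) :
    HasDerivAt (fun t : ℝ => inner ℝ (x + t • v) a) (inner ℝ v a) 0 := by
  have h := ((hasDerivAt_id (0 : ℝ)).mul_const (inner ℝ v a)).const_add (inner ℝ x a)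
  simpa [inner_add_left, inner_smul_left] using h

lemma hasDerivAt_sq {N : ℕ} (x v : EuclideanSpace ℝ (Fin N)) :
    HasDerivAt (fun t : ℝ => inner ℝ (x + t • v) (x + t • v)) (2 * inner ℝ x v) 0 := by
  have h0 : HasDerivAt (fun t : ℝ => x + t • v) v 0 := by
    simpa using ((hasDerivAt_id (0 : ℝ)).smul_const v).const_add x
  have h := h0.inner ℝ h0
  refine h.congr_deriv ?_
  simp [real_inner_comm x v]; ring

lemma iter1 {N : ℕ} {x : EuclideanSpace ℝ (Fin N)} (hx : x ≠ 0)
    (m : Fin 1 → EuclideanSpace ℝ (Fin N)) :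
    iteratedFDeriv ℝ 1 (logNorm N) x m = inner ℝ x (m 0) / inner ℝ x x := by
  have hs : inner ℝ x x ≠ 0 := inner_self_ne_zero.2 hx
  refine iter_step (g := fun y => Real.log (inner ℝ y y) / 2) (contDiffAt_logNorm hx _) m
    (Eventually.of_forall fun y => by simp [logNorm_eq]) ?_
  have h := ((hasDerivAt_sq x (m 0)).log (by simpa using hx)).div_const 2
  refine h.congr_deriv ?_
  simp only [zero_smul, add_zero]
  field_simp

lemma iter2 {N : ℕ} {x : EuclideanSpace ℝ (Fin N)} (hx : x ≠ 0)
    (m : Fin 2 → EuclideanSpace ℝ (Fin N)) :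
    iteratedFDeriv ℝ 2 (logNorm N) x m = inner ℝ (m 0) (m 1) / inner ℝ x x
      - 2 * inner ℝ x (m 0) * inner ℝ x (m 1) / inner ℝ x x ^ 2 := by
  have hs : inner ℝ x x ≠ 0 := inner_self_ne_zero.2 hx
  refine iter_step (g := fun y => inner ℝ y (m 1) / inner ℝ y y) (contDiffAt_logNorm hx _) m
    ?_ ?_
  · filter_upwards [isOpen_ne.mem_nhds hx] with y hy
    exact iter1 hy _
  have h := (hasDerivAt_in x (m 0) (m 1)).div (hasDerivAt_sq x (m 0)) (by simpa using hx)
  refine h.congr_deriv ?_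
  simp only [zero_smul, add_zero]
  field_simp

lemma iter3 {N : ℕ} {x : EuclideanSpace ℝ (Fin N)} (hx : x ≠ 0)
    (m : Fin 3 → EuclideanSpace ℝ (Fin N)) :
    iteratedFDeriv ℝ 3 (logNorm N) x m =
      - 2 * (inner ℝ (m 1) (m 2) * inner ℝ x (m 0) + inner ℝ (m 0) (m 1) * inner ℝ x (m 2)
        + inner ℝ (m 0) (m 2) * inner ℝ x (m 1)) / inner ℝ x x ^ 2
      + 8 * inner ℝ x (m 0) * inner ℝ x (m 1) * inner ℝ x (m 2) / inner ℝ x x ^ 3 := by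
  have hs : inner ℝ x x ≠ 0 := inner_self_ne_zero.2 hx
  refine iter_step (g := fun y => inner ℝ (m 1) (m 2) / inner ℝ y y
      - 2 * inner ℝ y (m 1) * inner ℝ y (m 2) / inner ℝ y y ^ 2) (contDiffAt_logNorm hx _) m
    ?_ ?_
  · filter_upwards [isOpen_ne.mem_nhds hx] with y hy
    exact iter2 hy _
  have hq := hasDerivAt_sq x (m 0)
  have h := ((hasDerivAt_const (0 : ℝ) (inner ℝ (m 1) (m 2))).div hq (by simpa using hx)).sub
    ((((hasDerivAt_in x (m 0) (m 1)).const_mul 2).mul (hasDerivAt_in x (m 0) (m 2))).div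
      (hq.pow 2) (by simpa using hx))
  refine h.congr_deriv ?_
  simp only [zero_smul, add_zero, Pi.pow_apply, Pi.mul_apply]
  field_simp
  ring

lemma part1 (x : EuclideanSpace ℝ (Fin 1)) (hx : x ≠ 0) :
    (∑ i : Fin 1 → Fin 1, mixedPartial 1 1 (logNorm 1) i x ^ 2) * ‖x‖ ^ 2 = 1 := by
  have hs : inner ℝ x x ≠ 0 := inner_self_ne_zero.2 hx
  have hq : inner ℝ x x = x 0 ^ 2 := by rw [PiLp.inner_apply]; simp; try ring
  rw [← real_inner_self_eq_norm_sq]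
  simp only [mixedPartial, iter1 hx, sum_fin_fun_succ, Fin.sum_univ_succ,
    EuclideanSpace.inner_single_right]
  rw [hq] at hs ⊢
  have : x 0 ≠ 0 := by simpa using hs
  simp
  field_simp

lemma part2 (x : EuclideanSpace ℝ (Fin 2)) (hx : x ≠ 0) :
    (∑ i : Fin 2 → Fin 2, mixedPartial 2 2 (logNorm 2) i x ^ 2) * ‖x‖ ^ 4 = 2 := by
  have hs : inner ℝ x x ≠ 0 := inner_self_ne_zero.2 hx
  have hq : inner ℝ x x = x 0 ^ 2 + x 1 ^ 2 := by
    rw [PiLp.inner_apply]; simp [Fin.sum_univ_succ]; try ring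
  rw [show ‖x‖ ^ 4 = (‖x‖ ^ 2) ^ 2 by ring, ← real_inner_self_eq_norm_sq]
  rw [show (∑ i : Fin 2 → Fin 2, mixedPartial 2 2 (logNorm 2) i x ^ 2) =
    ∑ a : Fin 2, ∑ b : Fin 2, ((if a = b then 1 else 0) / inner ℝ x x
      - 2 * x a * x b / inner ℝ x x ^ 2) ^ 2 by
    simp [mixedPartial, iter2 hx, sum_fin_fun_succ, EuclideanSpace.inner_single_right,
      Pi.single_apply, eq_comm]]
  rw [hq] at hs ⊢
  simp [Fin.sum_univ_succ]
  field_simp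
  ring

lemma mixed3 {x : EuclideanSpace ℝ (Fin 3)} (hx : x ≠ 0) (i : Fin 3 → Fin 3) :
    mixedPartial 3 3 (logNorm 3) i x =
      - 2 * ((if i 1 = i 2 then 1 else 0) * x (i 0) + (if i 0 = i 1 then 1 else 0) * x (i 2) +
        (if i 0 = i 2 then 1 else 0) * x (i 1)) / inner ℝ x x ^ 2
      + 8 * x (i 0) * x (i 1) * x (i 2) / inner ℝ x x ^ 3 := by
  rw [mixedPartial, iter3 hx]
  simp [EuclideanSpace.inner_single_right, eq_comm (a := i 2), eq_comm (a := i 1) (b := i 0)]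

set_option maxHeartbeats 2000000 in
lemma part3 (x : EuclideanSpace ℝ (Fin 3)) (hx : x ≠ 0) :
    (∑ i : Fin 3 → Fin 3, mixedPartial 3 3 (logNorm 3) i x ^ 2) * ‖x‖ ^ 6 = 28 := by
  have hs : inner ℝ x x ≠ 0 := inner_self_ne_zero.2 hx
  have hq : inner ℝ x x = x 0 ^ 2 + x 1 ^ 2 + x 2 ^ 2 := by
    rw [PiLp.inner_apply]; simp [Fin.sum_univ_three]; try ring
  rw [show ‖x‖ ^ 6 = (‖x‖ ^ 2) ^ 3 by ring, ← real_inner_self_eq_norm_sq]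
  rw [show (∑ i : Fin 3 → Fin 3, mixedPartial 3 3 (logNorm 3) i x ^ 2) =
    ∑ a : Fin 3, ∑ b : Fin 3, ∑ c : Fin 3,
      (- 2 * ((if b = c then 1 else 0) * x a + (if a = b then 1 else 0) * x c +
        (if a = c then 1 else 0) * x b) / inner ℝ x x ^ 2
      + 8 * x a * x b * x c / inner ℝ x x ^ 3) ^ 2 by
    simp only [sum_fin_fun_succ]
    refine Finset.sum_congr rfl fun a _ => Finset.sum_congr rfl fun b _ =>
      Finset.sum_congr rfl fun c _ => ?_
    rw [Fintype.sum_unique]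
    exact congrArg (· ^ 2) (mixed3 hx _)]
  rw [hq] at hs ⊢
  simp [Fin.sum_univ_three]
  field_simp
  ring

lemma ell1 (h : 0 < 1) : ell 1 h = 1 := by
  have h := part1 (EuclideanSpace.single 0 1) (by simp)
  rw [EuclideanSpace.norm_single, norm_one, one_pow, mul_one] at h
  exact h

lemma ell2 (h : 0 < 2) : ell 2 h = 2 := by
  have h := part2 (EuclideanSpace.single 0 1) (by simp)
  rw [EuclideanSpace.norm_single, norm_one, one_pow, mul_one] at h
  exact h

lemma ell3 (h : 0 < 3) : ell 3 h = 28 := by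
  have h := part3 (EuclideanSpace.single 0 1) (by simp)
  rw [EuclideanSpace.norm_single, norm_one, one_pow, mul_one] at h
  exact h

lemma omega1 : omegaSphere 1 = 2 := by
  have h := InnerProductSpace.volume_ball_of_dim_odd (E := EuclideanSpace ℝ (Fin 1)) (k := 0)
    (by simp) 0 1
  simp [omegaSphere, h]

lemma omega2 : omegaSphere 2 = 2 * Real.pi := by
  simp [omegaSphere, ENNReal.toReal_ofReal Real.pi_nonneg]

lemma omega3 : omegaSphere 3 = 4 * Real.pi := by
  have : (0 : ℝ) ≤ Real.pi * 4 / 3 := by positivity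
  simp [omegaSphere, ENNReal.toReal_ofReal this]
  ring

/-- `ℓ_1 = 1`, `ℓ_2 = 2`, `ℓ_3 = 28`, in the form
`∑ (∂^N log|x|)² ⋅ |x|^{2N} = ℓ_N` on `ℝ^N∖{0}`, and consequently
`K_1 = 1/2`, `K_2 = 1/(2π√2)`, `K_3 = 1/(4π√28)`. -/
theorem statement17 :
    (∀ x : EuclideanSpace ℝ (Fin 1), x ≠ 0 →
      (∑ i : Fin 1 → Fin 1, mixedPartial 1 1 (logNorm 1) i x ^ 2) * ‖x‖ ^ 2 = 1) ∧
    (∀ x : EuclideanSpace ℝ (Fin 2), x ≠ 0 →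
      (∑ i : Fin 2 → Fin 2, mixedPartial 2 2 (logNorm 2) i x ^ 2) * ‖x‖ ^ 4 = 2) ∧
    (∀ x : EuclideanSpace ℝ (Fin 3), x ≠ 0 →
      (∑ i : Fin 3 → Fin 3, mixedPartial 3 3 (logNorm 3) i x ^ 2) * ‖x‖ ^ 6 = 28) ∧
    (Real.sqrt (ell 1 (by norm_num)) * omegaSphere 1)⁻¹ = 1 / 2 ∧
    (Real.sqrt (ell 2 (by norm_num)) * omegaSphere 2)⁻¹ = 1 / (2 * Real.pi * Real.sqrt 2) ∧
    (Real.sqrt (ell 3 (by norm_num)) * omegaSphere 3)⁻¹ = 1 / (4 * Real.pi * Real.sqrt 28) := by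
  refine ⟨part1, part2, part3, ?_, ?_, ?_⟩
  · rw [ell1, omega1]; norm_num
  · rw [ell2, omega2, one_div, mul_comm]
  · rw [ell3, omega3, one_div, mul_comm]
end
end
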